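/- arXiv:0912.5093 — 2 statements merged into one kernel-verified Lean document; each statement's English description precedes it below -/
import Mathlib

section
/- For every ε > 0 and all sufficiently large d, there exists a subset F of Z/dZ with |F| ≥ d^(1-ε) containing no nontrivial three-term arithmetic progressions, such that the set of 'hexagons' {(x,h,k) ∈ (Z/dZ)^3 : x, x+h, x+k, x+k+2h, x+2k+h, x+2k+2h ∈ F} has cardinality at least d^(3-ε). -/
/-- The six vertices of a one-dimensional hexagon, with values in `[0, 5M)`. -/
def hexPt (M : ℕ) (j : Fin 6) (t : Fin M × Fin M × Fin M) : ℕ :=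
  ![2 * M + t.1 + t.2.1, 2 * M + t.1 + t.2.1 + t.2.2, 2 * M + t.1 + t.2.2,
    2 * M + t.1 - t.2.1, 2 * M + t.1 - t.2.1 - t.2.2, 2 * M + t.1 - t.2.2] j

lemma hexPt_lt (M : ℕ) (j : Fin 6) (t : Fin M × Fin M × Fin M) : hexPt M j t < 5 * M := by
  obtain ⟨c, h, k⟩ := t
  have := c.2; have := h.2; have := k.2
  fin_cases j <;> simp [hexPt] <;> omega

lemma hexPt_rel (M : ℕ) (j : Fin 6) (t : Fin M × Fin M × Fin M) :
    hexPt M (0 + j) t + 2 * hexPt M (4 + j) t = hexPt M (3 + j) t + 2 * hexPt M (5 + j) t ∧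
    hexPt M (2 + j) t + 2 * hexPt M (4 + j) t = 2 * hexPt M (3 + j) t + hexPt M (5 + j) t ∧
    hexPt M (1 + j) t + 3 * hexPt M (4 + j) t = 2 * hexPt M (3 + j) t + 2 * hexPt M (5 + j) t := by
  obtain ⟨c, h, k⟩ := t
  have := c.2; have := h.2; have := k.2
  fin_cases j <;> simp [hexPt] <;> omega

lemma hexPt_inj (M : ℕ) (j : Fin 6) (t t' : Fin M × Fin M × Fin M)
    (h4 : hexPt M (4 + j) t = hexPt M (4 + j) t')
    (h5 : hexPt M (5 + j) t = hexPt M (5 + j) t')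
    (h3 : hexPt M (3 + j) t = hexPt M (3 + j) t') : t = t' := by
  obtain ⟨c, h, k⟩ := t
  obtain ⟨c', h', k'⟩ := t'
  have := c.2; have := h.2; have := k.2
  have := c'.2; have := h'.2; have := k'.2
  simp only [Prod.mk.injEq, Fin.ext_iff]
  fin_cases j <;> simp [hexPt] at h3 h4 h5 <;> omega

/-- Popular fibre. -/
lemma exists_popular (m M : ℕ) :
    ∃ T : Fin 6 → ℕ, M ^ (3 * m) ≤
      (Finset.univ.filter fun t : Fin m → Fin M × Fin M × Fin M =>
        (fun s => ∑ i, hexPt M s (t i) ^ 2) = T).card * (25 * m * M ^ 2 + 1) ^ 6 := by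
  classical
  have hmaps : ∀ t ∈ (Finset.univ : Finset (Fin m → Fin M × Fin M × Fin M)),
      (fun s => ∑ i, hexPt M s (t i) ^ 2) ∈
        Fintype.piFinset (fun _ : Fin 6 => Finset.range (25 * m * M ^ 2 + 1)) := by
    intro t _
    rw [Fintype.mem_piFinset]
    intro s
    rw [Finset.mem_range, Nat.lt_succ_iff]
    calc ∑ i, hexPt M s (t i) ^ 2 ≤ ∑ _i : Fin m, (5 * M) ^ 2 :=
          Finset.sum_le_sum fun i _ => Nat.pow_le_pow_left (hexPt_lt M s (t i)).le 2
      _ = 25 * m * M ^ 2 := by simp; ring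
  have hne : (Fintype.piFinset
      (fun _ : Fin 6 => Finset.range (25 * m * M ^ 2 + 1))).Nonempty :=
    ⟨fun _ => 0, by simp⟩
  obtain ⟨T, -, hT⟩ := Finset.exists_le_card_fiber_of_nsmul_le_card_of_maps_to
    (M := ℚ) (b := (M : ℚ) ^ (3 * m) / (25 * m * M ^ 2 + 1) ^ 6) hmaps hne (by
      have : (25 * m * M ^ 2 + 1 : ℚ) ≠ 0 := by positivity
      simp
      rw [mul_div_cancel₀ _ (by positivity)]
      apply le_of_eq; ring)
  refine ⟨T, ?_⟩
  rw [div_le_iff₀ (by positivity)] at hT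
  exact_mod_cast hT

/-- The `s`-th vertex of the high-dimensional hexagon. -/
def hexVec (m M : ℕ) (s : Fin 6) (t : Fin 6 → Fin m → Fin M × Fin M × Fin M) :
    Fin (6 * m) → ℕ :=
  fun i => hexPt M (s + (finProdFinEquiv.symm i).1)
    (t (finProdFinEquiv.symm i).1 (finProdFinEquiv.symm i).2)

lemma hexVec_mem (m M : ℕ) (s : Fin 6) (t : Fin 6 → Fin m → Fin M × Fin M × Fin M)
    (T : Fin 6 → ℕ) (ht : ∀ j, (fun s => ∑ i, hexPt M s (t j i) ^ 2) = T) :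
    hexVec m M s t ∈ Behrend.sphere (6 * m) (5 * M) (∑ j, T j) := by
  rw [Behrend.sphere, Finset.mem_filter, Behrend.mem_box]
  refine ⟨fun i => hexPt_lt _ _ _, ?_⟩
  have h1 : ∑ i, hexVec m M s t i ^ 2 =
      ∑ p : Fin 6 × Fin m, hexPt M (s + p.1) (t p.1 p.2) ^ 2 :=
    Equiv.sum_comp (finProdFinEquiv (m := 6) (n := m)).symm
      (fun p : Fin 6 × Fin m => hexPt M (s + p.1) (t p.1 p.2) ^ 2)
  rw [h1, Fintype.sum_prod_type]
  have h2 : ∀ j, ∑ i, hexPt M (s + j) (t j i) ^ 2 = T (s + j) := fun j =>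
    congrFun (ht j) (s + j)
  simp only [h2]
  exact Equiv.sum_comp (Equiv.addLeft s) T

lemma two_mul_map_lt (n N d : ℕ) (hN : 0 < N) (hd : (2 * N) ^ n ≤ d) (x : Fin n → ℕ)
    (hx : x ∈ Behrend.box n N) : 2 * Behrend.map (2 * N - 1) x < d := by
  have h1 := Behrend.map_le_of_mem_box hx
  obtain ⟨N, rfl⟩ : ∃ k, N = k + 1 := ⟨N - 1, by omega⟩
  have e : 2 * (N + 1) - 1 = 2 * N + 1 := by omega
  rw [e] at h1 ⊢
  rw [Nat.add_sub_cancel, Behrend.sum_eq] at h1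
  have h2 : 0 < (2 * N + 1) ^ n := by positivity
  have h3 : (2 * N + 1) ^ n ≤ (2 * (N + 1)) ^ n := Nat.pow_le_pow_left (by omega) n
  omega

lemma main_count (m M d : ℕ) (hM : 0 < M) (hd : (10 * M) ^ (6 * m) ≤ d) :
    ∃ F : Set (ZMod d),
      (∀ n r : ZMod d, n ∈ F → n + r ∈ F → n + 2 * r ∈ F → r = 0) ∧
      M ^ (18 * m) ≤
        (Nat.card {p : ZMod d × ZMod d × ZMod d |
          p.1 ∈ F ∧ p.1 + p.2.1 ∈ F ∧ p.1 + p.2.2 ∈ F ∧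
          p.1 + p.2.2 + 2 * p.2.1 ∈ F ∧ p.1 + 2 * p.2.2 + p.2.1 ∈ F ∧
          p.1 + 2 * p.2.2 + 2 * p.2.1 ∈ F}) * (25 * m * M ^ 2 + 1) ^ 36 := by
  classical
  have hd' : (2 * (5 * M)) ^ (6 * m) ≤ d := by convert hd using 2; ring
  have hd0 : 0 < d := lt_of_lt_of_le (by positivity) hd
  have : NeZero d := ⟨hd0.ne'⟩
  obtain ⟨T, hT⟩ := exists_popular m M
  set P := (Finset.univ.filter fun t : Fin m → Fin M × Fin M × Fin M =>
        (fun s => ∑ i, hexPt M s (t i) ^ 2) = T) with hP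
  set S := Behrend.sphere (6 * m) (5 * M) (∑ j, T j) with hS
  set E : (Fin (6 * m) → ℕ) →+ ZMod d :=
    (Nat.castAddMonoidHom (ZMod d)).comp (Behrend.map (2 * (5 * M) - 1)) with hE
  have hEa : ∀ v, E v = ((Behrend.map (2 * (5 * M) - 1) v : ℕ) : ZMod d) := fun v => rfl
  have hlt : ∀ v ∈ S, 2 * Behrend.map (2 * (5 * M) - 1) v < d := fun v hv =>
    two_mul_map_lt _ _ _ (by omega) hd' v (Behrend.sphere_subset_box hv)
  have hinj : ∀ v ∈ S, ∀ w ∈ S, E v = E w → v = w := by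
    intro v hv w hw h
    rw [hEa, hEa, ZMod.natCast_eq_natCast_iff] at h
    have h' := Nat.ModEq.eq_of_lt_of_lt h (by have := hlt v hv; omega)
      (by have := hlt w hw; omega)
    have hb : ∀ v ∈ S, ∀ i, v i < 2 * (5 * M) - 1 := fun v hv i => by
      have := Behrend.mem_box.1 (Behrend.sphere_subset_box hv) i
      omega
    exact Behrend.map_injOn (hb v hv) (hb w hw) h'
  refine ⟨E '' (S : Set _), ?_, ?_⟩
  · rintro n r ⟨a, ha, rfl⟩ ⟨b, hb, hb'⟩ ⟨c, hc, hc'⟩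
    have key : E a + E c = E b + E b := by rw [hb', hc']; ring
    rw [hEa, hEa, hEa, ← Nat.cast_add, ← Nat.cast_add, ZMod.natCast_eq_natCast_iff] at key
    have h' := Nat.ModEq.eq_of_lt_of_lt key
      (by have := hlt a ha; have := hlt c hc; omega)
      (by have := hlt b hb; omega)
    have hfree := Behrend.threeAPFree_image_sphere (n := 6 * m) (d := 5 * M) (k := ∑ j, T j)
    have hab := hfree (Finset.mem_coe.2 (Finset.mem_image_of_mem _ ha))
      (Finset.mem_coe.2 (Finset.mem_image_of_mem _ hb))
      (Finset.mem_coe.2 (Finset.mem_image_of_mem _ hc)) h'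
    have : E a = E b := by rw [hEa, hEa, hab]
    rw [this] at hb'
    simpa using (hb'.symm.trans rfl : E b + r = E b)
  · set H := {p : ZMod d × ZMod d × ZMod d |
          p.1 ∈ E '' (S : Set _) ∧ p.1 + p.2.1 ∈ E '' (S : Set _) ∧ p.1 + p.2.2 ∈ E '' (S : Set _) ∧
          p.1 + p.2.2 + 2 * p.2.1 ∈ E '' (S : Set _) ∧
          p.1 + 2 * p.2.2 + p.2.1 ∈ E '' (S : Set _) ∧
          p.1 + 2 * p.2.2 + 2 * p.2.1 ∈ E '' (S : Set _)} with hH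
    have hmem : ∀ t : Fin 6 → P, ∀ s, hexVec m M s (fun j => (t j).1) ∈ S := by
      intro t s
      exact hexVec_mem m M s _ T (fun j => (Finset.mem_filter.1 (t j).2).2)
    have hcard : P.card ^ 6 ≤ Nat.card H := by
      let Φ : (Fin 6 → P) → H := fun t =>
        ⟨(E (hexVec m M 4 (fun j => (t j).1)),
          E (hexVec m M 5 (fun j => (t j).1)) - E (hexVec m M 4 (fun j => (t j).1)),
          E (hexVec m M 3 (fun j => (t j).1)) - E (hexVec m M 4 (fun j => (t j).1))), by
          set g : Fin 6 → ZMod d := fun s => E (hexVec m M s (fun j => (t j).1)) with hg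
          have hgm : ∀ s, g s ∈ E '' (S : Set _) := fun s => ⟨_, hmem t s, rfl⟩
          have r1 : g 0 + 2 * g 4 = g 3 + 2 * g 5 := by
            simp only [hg, two_mul, ← map_add]
            congr 1
            funext i
            have := (hexPt_rel M (finProdFinEquiv.symm i).1
              ((t (finProdFinEquiv.symm i).1).1 (finProdFinEquiv.symm i).2)).1
            simp only [hexVec, Pi.add_apply]
            omega
          have r2 : g 2 + 2 * g 4 = 2 * g 3 + g 5 := by
            simp only [hg, two_mul, ← map_add]
            congr 1
            funext i
            have := (hexPt_rel M (finProdFinEquiv.symm i).1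
              ((t (finProdFinEquiv.symm i).1).1 (finProdFinEquiv.symm i).2)).2.1
            simp only [hexVec, Pi.add_apply]
            omega
          have r3 : g 1 + (g 4 + 2 * g 4) = 2 * g 3 + 2 * g 5 := by
            simp only [hg, two_mul, ← map_add]
            congr 1
            funext i
            have := (hexPt_rel M (finProdFinEquiv.symm i).1
              ((t (finProdFinEquiv.symm i).1).1 (finProdFinEquiv.symm i).2)).2.2
            simp only [hexVec, Pi.add_apply]
            omega
          change g 4 ∈ _ ∧ g 4 + (g 5 - g 4) ∈ _ ∧ g 4 + (g 3 - g 4) ∈ _ ∧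
            g 4 + (g 3 - g 4) + 2 * (g 5 - g 4) ∈ _ ∧
            g 4 + 2 * (g 3 - g 4) + (g 5 - g 4) ∈ _ ∧
            g 4 + 2 * (g 3 - g 4) + 2 * (g 5 - g 4) ∈ _
          refine ⟨hgm 4, ?_, ?_, ?_, ?_, ?_⟩
          · convert hgm 5 using 1; ring
          · convert hgm 3 using 1; ring
          · convert hgm 0 using 1; linear_combination -r1
          · convert hgm 2 using 1; linear_combination -r2
          · convert hgm 1 using 1; linear_combination -r3⟩
      have hΦ : Function.Injective Φ := by
        intro t t' h
        have h0 := congrArg Subtype.val h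
        simp only [Φ, Prod.mk.injEq] at h0
        obtain ⟨e4, e5, e3⟩ := h0
        rw [e4] at e5 e3
        have f4 := hinj _ (hmem t 4) _ (hmem t' 4) e4
        have f5 := hinj _ (hmem t 5) _ (hmem t' 5) (sub_left_injective e5)
        have f3 := hinj _ (hmem t 3) _ (hmem t' 3) (sub_left_injective e3)
        funext j
        apply Subtype.ext
        funext i
        have g4 := congrFun f4 (finProdFinEquiv (j, i))
        have g5 := congrFun f5 (finProdFinEquiv (j, i))
        have g3 := congrFun f3 (finProdFinEquiv (j, i))
        simp only [hexVec, Equiv.symm_apply_apply] at g4 g5 g3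
        exact hexPt_inj M j _ _ g4 g5 g3
      have := Nat.card_le_card_of_injective Φ hΦ
      simpa using this
    calc M ^ (18 * m) = (M ^ (3 * m)) ^ 6 := by rw [← pow_mul]; congr 1; ring
      _ ≤ (P.card * (25 * m * M ^ 2 + 1) ^ 6) ^ 6 := Nat.pow_le_pow_left hT 6
      _ = P.card ^ 6 * (25 * m * M ^ 2 + 1) ^ 36 := by rw [mul_pow, ← pow_mul]
      _ ≤ _ := Nat.mul_le_mul_right _ hcard

lemma card_hex_le (d : ℕ) [NeZero d] (F : Set (ZMod d)) :
    (Nat.card {p : ZMod d × ZMod d × ZMod d |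
          p.1 ∈ F ∧ p.1 + p.2.1 ∈ F ∧ p.1 + p.2.2 ∈ F ∧
          p.1 + p.2.2 + 2 * p.2.1 ∈ F ∧ p.1 + 2 * p.2.2 + p.2.1 ∈ F ∧
          p.1 + 2 * p.2.2 + 2 * p.2.1 ∈ F}) ≤ Nat.card F ^ 3 := by
  have h := Nat.card_le_card_of_injective
    (fun p : {p : ZMod d × ZMod d × ZMod d |
          p.1 ∈ F ∧ p.1 + p.2.1 ∈ F ∧ p.1 + p.2.2 ∈ F ∧
          p.1 + p.2.2 + 2 * p.2.1 ∈ F ∧ p.1 + 2 * p.2.2 + p.2.1 ∈ F ∧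
          p.1 + 2 * p.2.2 + 2 * p.2.1 ∈ F} =>
      ((⟨p.1.1, p.2.1⟩, ⟨p.1.1 + p.1.2.1, p.2.2.1⟩, ⟨p.1.1 + p.1.2.2, p.2.2.2.1⟩) : F × F × F))
    (by
      rintro ⟨⟨x, h, k⟩, hp⟩ ⟨⟨x', h', k'⟩, hp'⟩ e
      simp only [Prod.mk.injEq, Subtype.mk.injEq] at e
      obtain ⟨rfl, e2, e3⟩ := e
      simp at e2 e3
      simp [e2, e3])
  refine h.trans (le_of_eq ?_)
  simp only [Nat.card_prod]
  ring

lemma exists_scale (n d : ℕ) (hn : 0 < n) (hd : 10 ^ n ≤ d) :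
    ∃ M : ℕ, 0 < M ∧ (10 * M) ^ n ≤ d ∧ d ≤ 20 ^ n * M ^ n := by
  classical
  have hb : ∀ M, (10 * M) ^ n ≤ d → M ≤ d := fun M h =>
    le_trans (le_trans (by omega) (Nat.le_self_pow hn.ne' (10 * M))) h
  have h1d : 1 ≤ d := hb 1 (by simpa using hd)
  set M := Nat.findGreatest (fun M => (10 * M) ^ n ≤ d) d with hM
  have hpos : 1 ≤ M := Nat.le_findGreatest h1d (by simpa using hd)
  have hs : (10 * M) ^ n ≤ d :=
    Nat.findGreatest_spec (P := fun M => (10 * M) ^ n ≤ d) h1d (by simpa using hd)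
  refine ⟨M, hpos, hs, ?_⟩
  by_contra! hc
  have : (10 * (M + 1)) ^ n ≤ d := by
    refine le_trans ?_ hc.le
    rw [← mul_pow]
    exact Nat.pow_le_pow_left (by omega) n
  have := Nat.le_findGreatest (P := fun M => (10 * M) ^ n ≤ d) (hb _ this) this
  omega

lemma cube_bound (m : ℕ) (ε d h M : ℝ) (hm1 : (1 : ℝ) < m) (hd1 : 1 ≤ d) (hM1 : 1 ≤ M)
    (hh : 0 ≤ h) (hdC : (20 ^ (6 * m)) ^ 3 * (26 * (m : ℝ)) ^ 36 ≤ d ^ (ε / 2))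
    (hMpow : M ^ 72 ≤ d ^ (ε / 2))
    (a1 : d ≤ 20 ^ (6 * m) * M ^ (6 * m))
    (a2 : M ^ (18 * m) ≤ h * (25 * m * M ^ 2 + 1) ^ 36) : d ^ 3 ≤ h * d ^ ε := by
  have a3 : (25 * m * M ^ 2 + 1) ≤ 26 * m * M ^ 2 := by
    have : (1 : ℝ) ≤ M ^ 2 := one_le_pow₀ hM1
    have h2 : (1 : ℝ) ≤ m * M ^ 2 := one_le_mul_of_one_le_of_one_le hm1.le this
    linarith
  calc d ^ 3 ≤ (20 ^ (6 * m) * M ^ (6 * m)) ^ 3 := by gcongr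
    _ = (20 ^ (6 * m)) ^ 3 * M ^ (18 * m) := by
        rw [mul_pow, ← pow_mul M]; congr 2; ring
    _ ≤ (20 ^ (6 * m)) ^ 3 * (h * (26 * m * M ^ 2) ^ 36) := by
        gcongr
        exact a2.trans (by gcongr)
    _ = h * ((20 ^ (6 * m)) ^ 3 * (26 * m) ^ 36 * M ^ 72) := by
        rw [mul_pow (26 * (m : ℝ)), ← pow_mul M]
        generalize ((20 : ℝ) ^ (6 * m)) ^ 3 = A
        generalize (26 * (m : ℝ)) ^ 36 = B
        ring
    _ ≤ h * (d ^ (ε / 2) * d ^ (ε / 2)) := by gcongr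
    _ = h * d ^ ε := by
        rw [← Real.rpow_add (by linarith), add_halves]

/-- Behrend-type construction with many hexagons: for every `ε > 0` and all sufficiently
large `d`, there is a subset `F` of `ℤ/dℤ` with `|F| ≥ d^(1-ε)`, containing no nontrivial
three-term arithmetic progressions, such that the set of hexagons
`{(x,h,k) : x, x+h, x+k, x+k+2h, x+2k+h, x+2k+2h ∈ F}` has cardinality at least `d^(3-ε)`. -/
theorem statement1 (ε : ℝ) (hε : 0 < ε) :
    ∃ d₀ : ℕ, ∀ d : ℕ, d₀ ≤ d → ∃ F : Set (ZMod d),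
      (d : ℝ) ^ ((1 : ℝ) - ε) ≤ (Nat.card F : ℝ) ∧
      (∀ n r : ZMod d, n ∈ F → n + r ∈ F → n + 2 * r ∈ F → r = 0) ∧
      (d : ℝ) ^ ((3 : ℝ) - ε) ≤
        (Nat.card {p : ZMod d × ZMod d × ZMod d |
          p.1 ∈ F ∧ p.1 + p.2.1 ∈ F ∧ p.1 + p.2.2 ∈ F ∧
          p.1 + p.2.2 + 2 * p.2.1 ∈ F ∧ p.1 + 2 * p.2.2 + p.2.1 ∈ F ∧
          p.1 + 2 * p.2.2 + 2 * p.2.1 ∈ F} : ℝ) := by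
  obtain ⟨m, hm⟩ := exists_nat_gt (max 1 (24 / ε))
  have hm1 : (1 : ℝ) < m := lt_of_le_of_lt (le_max_left _ _) hm
  have hm2 : 24 / ε < m := lt_of_le_of_lt (le_max_right _ _) hm
  have hm0 : 0 < m := by
    have : (0 : ℝ) < m := by linarith
    exact_mod_cast this
  have hmε : 12 / (m : ℝ) < ε / 2 := by
    rw [div_lt_iff₀ hε] at hm2
    rw [div_lt_iff₀ (by linarith)]
    linarith
  -- the constant
  obtain ⟨C, hC⟩ : ∃ C : ℝ, C = (20 ^ (6 * m)) ^ 3 * (26 * m) ^ 36 := ⟨_, rfl⟩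
  have hev : ∀ᶠ d : ℕ in Filter.atTop, C ≤ (d : ℝ) ^ (ε / 2) :=
    ((tendsto_rpow_atTop (half_pos hε)).comp tendsto_natCast_atTop_atTop).eventually_ge_atTop C
  obtain ⟨d₁, hd₁⟩ := Filter.eventually_atTop.1 hev
  refine ⟨max d₁ (10 ^ (6 * m)), fun d hd => ?_⟩
  have hdC := hd₁ d (le_trans (le_max_left _ _) hd)
  obtain ⟨M, hM, hMd, hdM⟩ := exists_scale (6 * m) d (by omega) (le_trans (le_max_right _ _) hd)
  have hd0 : 0 < d := lt_of_lt_of_le (by positivity) hMd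
  have : NeZero d := ⟨hd0.ne'⟩
  have hd1 : (1 : ℝ) ≤ d := by exact_mod_cast hd0
  obtain ⟨F, hF, hH⟩ := main_count m M d hM hMd
  have hle := card_hex_le d F
  refine ⟨F, ?_⟩
  rw [← and_assoc, and_comm (b := ∀ n r : ZMod d, _), and_assoc]
  refine ⟨hF, ?_⟩
  generalize Nat.card {p : ZMod d × ZMod d × ZMod d |
          p.1 ∈ F ∧ p.1 + p.2.1 ∈ F ∧ p.1 + p.2.2 ∈ F ∧
          p.1 + p.2.2 + 2 * p.2.1 ∈ F ∧ p.1 + 2 * p.2.2 + p.2.1 ∈ F ∧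
          p.1 + 2 * p.2.2 + 2 * p.2.1 ∈ F} = h at hH hle ⊢
  have hdpos : (0 : ℝ) < d := by exact_mod_cast hd0
  have hM1 : (1 : ℝ) ≤ M := by exact_mod_cast hM
  have hMpow : (M : ℝ) ^ 72 ≤ (d : ℝ) ^ (ε / 2) := by
    have h1 : (M : ℝ) ^ (6 * m) ≤ d := by
      have : M ^ (6 * m) ≤ d := le_trans (Nat.pow_le_pow_left (by omega) _) hMd
      exact_mod_cast this
    have h2 : (M : ℝ) ^ 72 = ((M : ℝ) ^ (6 * m)) ^ (12 / (m : ℝ)) := by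
      rw [← Real.rpow_natCast, ← Real.rpow_natCast, ← Real.rpow_mul (Nat.cast_nonneg _)]
      congr 1
      push_cast
      field_simp
      norm_num
    rw [h2]
    calc ((M : ℝ) ^ (6 * m)) ^ (12 / (m : ℝ)) ≤ (d : ℝ) ^ (12 / (m : ℝ)) :=
          Real.rpow_le_rpow (by positivity) h1 (by positivity)
      _ ≤ _ := Real.rpow_le_rpow_of_exponent_le hd1 hmε.le
  have hcube : (d : ℝ) ^ 3 ≤ h * (d : ℝ) ^ ε := by
    have a1 : (d : ℝ) ≤ 20 ^ (6 * m) * (M : ℝ) ^ (6 * m) := by exact_mod_cast hdM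
    have a2 : (M : ℝ) ^ (18 * m) ≤ h * (25 * m * (M : ℝ) ^ 2 + 1) ^ 36 := by exact_mod_cast hH
    exact cube_bound m ε d h M hm1 hd1 hM1 (Nat.cast_nonneg _) (hC ▸ hdC) hMpow a1 a2
  have hmain : (d : ℝ) ^ ((3 : ℝ) - ε) ≤ h := by
    rw [Real.rpow_sub hdpos, div_le_iff₀ (Real.rpow_pos_of_pos hdpos _)]
    exact_mod_cast hcube
  refine ⟨?_, hmain⟩
  have hle' : (h : ℝ) ≤ (Nat.card F : ℝ) ^ 3 := by exact_mod_cast hle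
  refine le_of_pow_le_pow_left₀ (n := 3) three_ne_zero (Nat.cast_nonneg _) ?_
  refine le_trans ?_ (hmain.trans hle')
  rw [← Real.rpow_natCast, ← Real.rpow_mul hdpos.le]
  apply Real.rpow_le_rpow_of_exponent_le hd1
  clear * - hε
  push_cast
  linarith
end

section
/- There exists a positive semi-definite Hermitian d × d complex matrix A (indexed by Z/dZ, extended periodically) such that the sum over all n, r ∈ Z/dZ of A(n, n+r)·A(n+r, n+2r)·A(n+2r, n) is a negative real number. -/
open ComplexOrder

/-- Integer vectors found by numerical optimisation; their Gram matrix is the example. -/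
def vecTable : List (List (List ℤ)) :=
  [[[4, -3, -1, 6, 0, -1],
    [7, -1, 0, 1, -2, 6],
    [-1, -1, 5, 2, 4, -3],
    [0, 0, 0, 0, 0, 0],
    [-5, -4, 0, 1, -4, 1],
    [-2, 3, -4, 3, -7, 3],
    [3, 5, -6, 3, 0, 3],
    [5, -3, -2, 1, 1, 4],
    [0, 0, 0, 0, 0, 0]],
   [[0, 0, 0, 0, 0, 0],
    [1, -5, 0, -7, -3, -1],
    [-2, 1, 4, 5, -3, -3],
    [-2, 0, -6, 2, 3, 4],
    [4, 1, 1, -6, -1, 1],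
    [6, 0, -5, -2, -1, -5],
    [-6, 0, -1, -7, 0, 1],
    [-2, -3, -2, -4, 2, -5],
    [3, -5, 4, 0, -2, 2]],
   [[6, 4, -1, 3, -2, -1],
    [7, 1, -4, 0, 6, 1],
    [-1, 0, 0, -3, 7, 1],
    [3, 1, 7, 0, 1, 1],
    [0, 0, 0, 0, 0, 0],
    [1, -5, 3, -5, 1, 5],
    [-1, -4, -1, 0, -4, -6],
    [2, -4, -4, 0, 5, -1],
    [-6, 3, 0, 0, -2, 4]],
   [[0, 0, 0, 0, 0, 0],
    [0, 2, 2, -7, 2, -6],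
    [3, -1, -4, -3, -6, 1],
    [0, 1, 1, 2, 4, 6],
    [0, 0, 0, 0, 0, 0],
    [5, -4, -1, 2, -7, 0],
    [2, 0, 5, -1, -4, -5],
    [2, -3, -3, 2, 0, 5],
    [2, 2, -3, -1, 0, -6]],
   [[-2, -6, 1, 3, 4, 0],
    [1, 5, 4, 4, -3, 4],
    [1, 0, -5, -6, 1, 3],
    [0, 0, 0, 0, 0, 0],
    [0, 0, 0, 0, 0, 0],
    [2, -1, 2, 2, 3, -8],
    [2, -2, -7, 5, -2, -2],
    [-1, -2, -1, -1, 3, -5],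
    [0, 0, 0, 0, 0, 0]],
   [[0, 0, 0, 0, 0, 0],
    [3, 8, 2, 0, 4, -2],
    [0, 0, 0, 0, 0, 0],
    [0, 0, 0, 0, 0, 0],
    [1, 4, 0, 5, 5, -1],
    [0, 5, -6, -2, 3, -3],
    [-2, 3, -3, -4, -6, -4],
    [0, 0, 0, 0, 0, 0],
    [-6, 4, -1, 1, 0, 4]],
   [[-3, 3, 1, -7, -1, 3],
    [-7, -2, -1, 6, 1, -1],
    [0, 0, 0, 0, 0, 0],
    [1, 3, 1, 1, 5, 7],
    [5, 3, 1, 0, 5, -1],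
    [-6, 6, -2, 2, 0, 2],
    [5, 5, -1, 1, -4, -2],
    [0, 0, 0, 0, 0, 0],
    [-2, -2, 3, -1, -1, 6]],
   [[2, 8, -2, -3, -2, 1],
    [-1, -1, -4, 4, 7, -4],
    [0, 0, 0, 0, 0, 0],
    [2, -1, 6, -2, -2, -4],
    [5, 1, 1, -6, 0, -1],
    [-3, 0, 6, 4, 3, -3],
    [5, 1, 7, 1, 2, 0],
    [0, 0, 0, 0, 0, 0],
    [4, -5, 4, 0, 0, 2]],
   [[6, 4, -2, 4, -2, -1],
    [4, -7, -5, 1, 1, 2],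
    [0, -1, 1, -3, 7, 1],
    [3, 2, 7, -1, 2, 3],
    [1, 1, -1, 4, 5, -2],
    [1, 0, -3, -7, 4, 3],
    [0, 7, -1, -5, -1, 3],
    [1, -5, -4, -2, 2, 0],
    [0, 0, 0, 0, 0, 0]]]

/-- Dot product of integer lists. -/
def dotL : List ℤ → List ℤ → ℤ
  | a :: as, b :: bs => a * b + dotL as bs
  | _, _ => 0

/-- The `n`-th vector. -/
def vec (n : ℕ) : List ℤ := (vecTable.getD (n / 9) []).getD (n % 9) []

/-- Integer Gram matrix. -/
def gram (n m : ℕ) : ℤ := dotL (vec n) (vec m)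

/-- One term of the restricted third moment. -/
def term3 (n r : ℕ) : ℤ :=
  gram n ((n + r) % 81) * gram ((n + r) % 81) ((n + 2 * r) % 81) * gram ((n + 2 * r) % 81) n

/-- Sum of `f` over numbers below the argument. -/
def sumTo (f : ℕ → ℤ) : ℕ → ℤ
  | 0 => 0
  | k + 1 => sumTo f k + f k

theorem sumTo_eq (f : ℕ → ℤ) (k : ℕ) : sumTo f k = ∑ i ∈ Finset.range k, f i := by
  induction k with
  | zero => rfl
  | succ k ih => rw [Finset.sum_range_succ, ← ih]; rfl

theorem total_neg : sumTo (fun n => sumTo (fun r => term3 n r) 81) 81 < 0 := by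
  decide +kernel

theorem vec_len : ∀ n : ℕ, n < 81 → (vec n).length = 6 := by decide +kernel

theorem dotL_eq (a b : List ℤ) (ha : a.length = 6) (hb : b.length = 6) :
    dotL a b = ∑ k : Fin 6, a.getD k 0 * b.getD k 0 := by
  match a, b, ha, hb with
  | [a0, a1, a2, a3, a4, a5], [b0, b1, b2, b3, b4, b5], _, _ =>
    simp [dotL, Fin.sum_univ_succ]

/-- The rectangular factor. -/
noncomputable def bmat : Matrix (Fin 6) (ZMod (80 + 1)) ℂ :=
  fun k n => (((vec n.val).getD k 0 : ℤ) : ℂ)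

theorem bmat_gram (n m : ZMod (80 + 1)) :
    (bmat.conjTranspose * bmat) n m = ((gram n.val m.val : ℤ) : ℂ) := by
  have hn : n.val < 81 := ZMod.val_lt n
  have hm : m.val < 81 := ZMod.val_lt m
  rw [gram, dotL_eq _ _ (vec_len _ hn) (vec_len _ hm), Matrix.mul_apply]
  push_cast
  refine Finset.sum_congr rfl fun k _ => ?_
  rw [Matrix.conjTranspose_apply]
  simp [bmat]

theorem sum_zmod (f : ℕ → ℤ) :
    ∑ n : ZMod (80 + 1), f n.val = sumTo f 81 := by
  rw [sumTo_eq]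
  exact Fin.sum_univ_eq_sum_range f 81

theorem val_two_mul (n r : ZMod (80 + 1)) : (n + 2 * r).val = (n.val + 2 * r.val) % 81 := by
  have h : n + 2 * r = ((n.val + 2 * r.val : ℕ) : ZMod (80 + 1)) := by
    push_cast
    rw [ZMod.natCast_zmod_val, ZMod.natCast_zmod_val]
  rw [h, ZMod.val_natCast]

theorem moment_eq :
    (∑ n : ZMod (80 + 1), ∑ r : ZMod (80 + 1),
      (bmat.conjTranspose * bmat) n (n + r) * (bmat.conjTranspose * bmat) (n + r) (n + 2 * r) *
        (bmat.conjTranspose * bmat) (n + 2 * r) n) =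
      ((sumTo (fun n => sumTo (fun r => term3 n r) 81) 81 : ℤ) : ℂ) := by
  rw [← sum_zmod]
  push_cast
  refine Finset.sum_congr rfl fun n _ => ?_
  rw [← sum_zmod]
  push_cast
  refine Finset.sum_congr rfl fun r _ => ?_
  rw [bmat_gram, bmat_gram, bmat_gram, val_two_mul, ZMod.val_add, term3]
  push_cast
  rfl

/-- There exists a positive semi-definite Hermitian complex matrix, indexed by `ℤ/dℤ`,
for which the restricted third moment
`∑_{n,r} A(n,n+r) A(n+r,n+2r) A(n+2r,n)` is a negative real number. -/
theorem statement4 :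
    ∃ (d : ℕ) (A : Matrix (ZMod (d + 1)) (ZMod (d + 1)) ℂ),
      A.IsHermitian ∧ A.PosSemidef ∧
      (let S : ℂ := ∑ n : ZMod (d + 1), ∑ r : ZMod (d + 1),
        A n (n + r) * A (n + r) (n + 2 * r) * A (n + 2 * r) n
       S.im = 0 ∧ S.re < 0) := by
  refine ⟨80, bmat.conjTranspose * bmat, Matrix.isHermitian_conjTranspose_mul_self _,
    Matrix.posSemidef_conjTranspose_mul_self _, ?_⟩
  intro S
  have hS : S = ((sumTo (fun n => sumTo (fun r => term3 n r) 81) 81 : ℤ) : ℂ) := moment_eq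
  rw [hS]
  refine ⟨Complex.intCast_im _, ?_⟩
  rw [Complex.intCast_re]
  exact_mod_cast total_neg
end
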